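/- arXiv:2603.17344 — 2 statements merged into one kernel-verified Lean document; each statement's English description precedes it below -/
import Mathlib

section
/- Suppose Assumption 2 holds for X ⊆ ℝ^n, Ξ ⊆ ℝ^m, g : X × Ξ → ℝ, exponents (γ, ρ), and limit function g*, and suppose ρ = 0. Then 0 ∈ X^∞_γ and g*(0, w) < 0 for every w ∈ Ξ. -/
open Filter Topology MeasureTheory Set

noncomputable section

/-- Euclidean space `ℝ^d`. -/
abbrev Rn (d : ℕ) : Type := EuclideanSpace ℝ (Fin d)

/-- A set is a cone: closed under multiplication by positive scalars. -/
def IsPosCone {d : ℕ} (Z : Set (Rn d)) : Prop :=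
  ∀ c : ℝ, 0 < c → ∀ z ∈ Z, c • z ∈ Z

/-- The asymptotic cone `A^∞_θ` of a set `A` with rate `θ`. -/
def asymCone {d : ℕ} (A : Set (Rn d)) (θ : ℝ) : Set (Rn d) :=
  {y | ∃ a : ℕ → Rn d, ∃ lamk : ℕ → ℝ,
    (∀ k, a k ∈ A) ∧ (∀ k, 0 < lamk k) ∧ Tendsto lamk atTop atTop ∧
    Tendsto (fun k => (lamk k ^ θ)⁻¹ • a k) atTop (𝓝 y)}

/-- Condition (A1): `gs` is a continuous limit function on `X^∞_γ × Ξ` and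
`g(x_u, z_u)/u^ρ → gs(y, w)` along all admissible families. -/
def CondA1 {n m : ℕ} (X : Set (Rn n)) (Ξ : Set (Rn m)) (g : Rn n → Rn m → ℝ)
    (γ ρ : ℝ) (gs : Rn n → Rn m → ℝ) : Prop :=
  ContinuousOn (fun p : Rn n × Rn m => gs p.1 p.2) ((asymCone X γ) ×ˢ Ξ) ∧
  ∀ y ∈ asymCone X γ, ∀ w ∈ Ξ, ∀ xu : ℝ → Rn n, ∀ zu : ℝ → Rn m,
    (∀ u : ℝ, 0 < u → xu u ∈ X) → (∀ u : ℝ, 0 < u → zu u ∈ Ξ) →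
    Tendsto (fun u : ℝ => (u ^ γ)⁻¹ • xu u) atTop (𝓝 y) →
    Tendsto (fun u : ℝ => u⁻¹ • zu u) atTop (𝓝 w) →
    Tendsto (fun u : ℝ => g (xu u) (zu u) / u ^ ρ) atTop (𝓝 (gs y w))

/-- Condition (A2): `X^∞_γ \ {0} ≠ ∅`. -/
def CondA2 {n : ℕ} (X : Set (Rn n)) (γ : ℝ) : Prop :=
  (asymCone X γ \ {0}).Nonempty

/-- Condition (A3): `gs(y, 0) < 0` for all `y ∈ X^∞_γ \ {0}`. -/
def CondA3 {n m : ℕ} (X : Set (Rn n)) (γ : ℝ) (gs : Rn n → Rn m → ℝ) : Prop :=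
  ∀ y ∈ asymCone X γ \ {0}, gs y 0 < 0

/-- Condition (A4): every `y ∈ X^∞_γ \ {0}` admits `w ∈ Ξ` with `gs(y, w) > 0`. -/
def CondA4 {n m : ℕ} (X : Set (Rn n)) (Ξ : Set (Rn m)) (γ : ℝ)
    (gs : Rn n → Rn m → ℝ) : Prop :=
  ∀ y ∈ asymCone X γ \ {0}, ∃ w ∈ Ξ, 0 < gs y w

/-- Condition (A5): if `γ < 0` then `g(0, z) ≤ 0` for all `z ∈ Ξ`. -/
def CondA5 {n m : ℕ} (Ξ : Set (Rn m)) (g : Rn n → Rn m → ℝ) (γ : ℝ) : Prop :=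
  γ < 0 → ∀ z ∈ Ξ, g 0 z ≤ 0

/-- Regularity preconditions of Assumption 2: `X` nonempty closed convex, `Ξ` a
nonempty closed cone, `g(·, z)` convex and lower semicontinuous on `X` for each
`z ∈ Ξ`, and `g(x, ·)` continuous on `Ξ` for each `x ∈ X`. -/
def GRegular {n m : ℕ} (X : Set (Rn n)) (Ξ : Set (Rn m))
    (g : Rn n → Rn m → ℝ) : Prop :=
  X.Nonempty ∧ IsClosed X ∧ Convex ℝ X ∧
  Ξ.Nonempty ∧ IsClosed Ξ ∧ IsPosCone Ξ ∧
  (∀ z ∈ Ξ, ConvexOn ℝ X (fun x => g x z)) ∧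
  (∀ z ∈ Ξ, LowerSemicontinuousOn (fun x => g x z) X) ∧
  (∀ x ∈ X, ContinuousOn (fun z => g x z) Ξ)

/-- Assumption 2: the regularity preconditions together with conditions (A1)–(A5)
for exponents `(γ, ρ)` with `γ ≠ 0`, `ρ ≥ 0`, and limit function `gs`. -/
def Assumption2 {n m : ℕ} (X : Set (Rn n)) (Ξ : Set (Rn m)) (g : Rn n → Rn m → ℝ)
    (γ ρ : ℝ) (gs : Rn n → Rn m → ℝ) : Prop :=
  GRegular X Ξ g ∧ γ ≠ 0 ∧ 0 ≤ ρ ∧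
  CondA1 X Ξ g γ ρ gs ∧ CondA2 X γ ∧ CondA3 X γ gs ∧ CondA4 X Ξ γ gs ∧
  CondA5 Ξ g γ

/-!
Convexity of `X` upgrades a point `y` of the asymptotic cone from a limit along some sequence of
scales to a limit along all scales `u → ∞`, so (A1) applies to it. Replacing `u` by `t * u` in (A1)
then gives the homogeneity `gs (t ^ γ • y) (t • w) = t ^ ρ * gs y w`. For `ρ = 0` this makes `gs`
constant on the open rays through `(y, 0)` and through `(0, w)`. Both rays end at `(0, 0)`, so by
continuity `gs 0 w = gs 0 0 = gs y 0`.
-/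

lemma tendsto_smul_nhdsGT_zero {E : Type*} [AddCommGroup E] [Module ℝ E] [TopologicalSpace E]
    [ContinuousSMul ℝ E] (v : E) : Tendsto (fun r : ℝ => r • v) (𝓝[>] 0) (𝓝 0) := by
  have hcont : Continuous fun r : ℝ => r • v := by fun_prop
  simpa only [zero_smul] using (hcont.tendsto 0).mono_left nhdsWithin_le_nhds

lemma eq_of_continuousWithinAt_zero_of_forall_pos_smul {E F : Type*} [AddCommGroup E] [Module ℝ E]
    [TopologicalSpace E] [ContinuousSMul ℝ E] [TopologicalSpace F] [T2Space F] {f : E → F}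
    {s : Set E} {v : E} {c : F} (hf : ContinuousWithinAt f s 0) (hs : ∀ r : ℝ, 0 < r → r • v ∈ s)
    (hc : ∀ r : ℝ, 0 < r → f (r • v) = c) : f 0 = c := by
  have hray : Tendsto (fun r : ℝ => r • v) (𝓝[>] 0) (𝓝[s] 0) :=
    tendsto_nhdsWithin_iff.2 ⟨tendsto_smul_nhdsGT_zero v, eventually_mem_nhdsWithin.mono hs⟩
  exact tendsto_nhds_unique (hf.tendsto.comp hray)
    (tendsto_const_nhds.congr' (eventually_mem_nhdsWithin.mono fun r hr => (hc r hr).symm))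

lemma exists_forall_mem_tendsto_of_eventually_exists_dist_lt {E F : Type*} [PseudoMetricSpace F]
    {X : Set E} (hX : X.Nonempty) {f : ℝ → E → F} {y : F}
    (h : ∀ ε > 0, ∀ᶠ u in atTop, ∃ x ∈ X, dist (f u x) y < ε) :
    ∃ xu : ℝ → E, (∀ u, xu u ∈ X) ∧ Tendsto (fun u => f u (xu u)) atTop (𝓝 y) := by
  have near_optimal (u : ℝ) :
      ∃ x ∈ X, dist y (f u x) < Metric.infDist y (f u '' X) + Real.exp (-u) := by
    simpa only [exists_mem_image] using (Metric.infDist_lt_iff (hX.image (f u))).1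
      (lt_add_of_pos_right _ (Real.exp_pos (-u)))
  choose xu hxu hdist using near_optimal
  refine ⟨xu, hxu, Metric.tendsto_nhds.2 fun ε hε => ?_⟩
  have hexp : ∀ᶠ u : ℝ in atTop, Real.exp (-u) < ε / 2 :=
    Real.tendsto_exp_neg_atTop_nhds_zero.eventually_lt_const (half_pos hε)
  filter_upwards [h (ε / 2) (half_pos hε), hexp] with u ⟨x, hx, hxy⟩ hu
  have hinf : Metric.infDist y (f u '' X) ≤ dist y (f u x) :=
    Metric.infDist_le_dist_of_mem (mem_image_of_mem _ hx)
  rw [dist_comm] at hxy ⊢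
  linarith [hdist u]

lemma exists_mem_inv_smul_eq_add_of_convex {E : Type*} [AddCommGroup E] [Module ℝ E] {X : Set E}
    (hX : Convex ℝ X) {a b : E} (ha : a ∈ X) (hb : b ∈ X) {c s : ℝ} (hc : 0 < c) (hcs : c ≤ s) :
    ∃ x ∈ X, c⁻¹ • x = s⁻¹ • a + (1 - c / s) • c⁻¹ • b := by
  have hs : 0 < s := hc.trans_le hcs
  refine ⟨(c / s) • a + (1 - c / s) • b, hX ha hb (by positivity)
    (sub_nonneg.2 ((div_le_one hs).2 hcs)) (by ring), ?_⟩
  match_scalars <;> field_simp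

lemma IsPosCone.zero_mem {d : ℕ} {Z : Set (Rn d)} (hZ : IsPosCone Z) (hclosed : IsClosed Z)
    (hne : Z.Nonempty) : (0 : Rn d) ∈ Z := by
  obtain ⟨z, hz⟩ := hne
  exact hclosed.mem_of_tendsto (tendsto_smul_nhdsGT_zero z)
    (eventually_mem_nhdsWithin.mono fun c hc => hZ c hc z hz)

section AsymCone

variable {d : ℕ} {A : Set (Rn d)} {θ : ℝ} {y : Rn d}

lemma nonempty_of_mem_asymCone (hy : y ∈ asymCone A θ) : A.Nonempty :=
  let ⟨a, _, ha, _⟩ := hy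
  ⟨a 0, ha 0⟩

lemma mem_asymCone_of_tendsto {xu : ℝ → Rn d} (hxu : ∀ u, 0 < u → xu u ∈ A)
    (hlim : Tendsto (fun u : ℝ => (u ^ θ)⁻¹ • xu u) atTop (𝓝 y)) : y ∈ asymCone A θ := by
  have hscale : Tendsto (fun k : ℕ => (k : ℝ) + 1) atTop atTop :=
    tendsto_atTop_add_const_right _ _ tendsto_natCast_atTop_atTop
  exact ⟨fun k => xu (k + 1), fun k => k + 1, fun k => hxu _ (by positivity),
    fun k => by positivity, hscale, hlim.comp hscale⟩

lemma rpow_smul_mem_asymCone (hy : y ∈ asymCone A θ) {t : ℝ} (ht : 0 < t) :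
    t ^ θ • y ∈ asymCone A θ := by
  obtain ⟨a, l, ha, hl, hl_top, hlim⟩ := hy
  refine ⟨a, fun k => l k / t, ha, fun k => div_pos (hl k) ht, hl_top.atTop_div_const ht, ?_⟩
  refine (hlim.const_smul (t ^ θ)).congr fun k => ?_
  rw [smul_smul, Real.div_rpow (hl k).le ht.le, inv_div, div_eq_mul_inv]

lemma smul_mem_asymCone (hθ : θ ≠ 0) (hy : y ∈ asymCone A θ) {r : ℝ} (hr : 0 < r) :
    r • y ∈ asymCone A θ := by
  simpa only [Real.rpow_inv_rpow hr.le hθ] using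
    rpow_smul_mem_asymCone hy (Real.rpow_pos_of_pos hr θ⁻¹)

lemma zero_mem_closure_of_mem_asymCone_of_neg (hθ : θ < 0) (hy : y ∈ asymCone A θ) :
    (0 : Rn d) ∈ closure A := by
  obtain ⟨a, l, ha, hl, hl_top, hlim⟩ := hy
  have hscale : Tendsto (fun k => l k ^ θ) atTop (𝓝 0) := by
    simpa only [neg_neg, Function.comp_def] using
      (tendsto_rpow_neg_atTop (neg_pos.2 hθ)).comp hl_top
  have ha_zero : Tendsto a atTop (𝓝 0) := by
    rw [← zero_smul ℝ y]
    exact (hscale.smul hlim).congr fun k => smul_inv_smul₀ (Real.rpow_pos_of_pos (hl k) θ).ne' _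
  exact mem_closure_of_tendsto ha_zero (Eventually.of_forall ha)

lemma eventually_exists_norm_inv_rpow_smul_lt (hθ : θ ≠ 0) (hy : y ∈ asymCone A θ) {ε : ℝ}
    (hε : 0 < ε) : ∀ᶠ u : ℝ in atTop, ∃ b ∈ A, ‖(u ^ θ)⁻¹ • b‖ < ε := by
  rcases hθ.lt_or_gt with hneg | hpos
  · filter_upwards [eventually_gt_atTop 0] with u hu
    have huθ : 0 < u ^ θ := Real.rpow_pos_of_pos hu θ
    obtain ⟨b, hb, hb_norm⟩ := Metric.mem_closure_iff.1
      (zero_mem_closure_of_mem_asymCone_of_neg hneg hy) (u ^ θ * ε) (mul_pos huθ hε)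
    rw [dist_zero_left] at hb_norm
    refine ⟨b, hb, ?_⟩
    rwa [norm_smul, norm_inv, Real.norm_of_nonneg huθ.le, inv_mul_lt_iff₀ huθ]
  · obtain ⟨b, hb⟩ := nonempty_of_mem_asymCone hy
    have hlim : Tendsto (fun u : ℝ => ‖(u ^ θ)⁻¹ • b‖) atTop (𝓝 0) := by
      simpa only [Pi.inv_apply, zero_smul, norm_zero] using
        ((tendsto_rpow_atTop hpos).inv_tendsto_atTop.smul_const b).norm
    exact (hlim.eventually_lt_const hε).mono fun u hu => ⟨b, hb, hu⟩

lemma eventually_exists_rpow_le_and_dist_lt (hy : y ∈ asymCone A θ) {ε : ℝ} (hε : 0 < ε) :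
    ∀ᶠ u : ℝ in atTop, ∃ a ∈ A, ∃ s, u ^ θ ≤ s ∧ dist (s⁻¹ • a) y < ε := by
  obtain ⟨a, l, ha, hl, hl_top, hlim⟩ := hy
  have hclose : ∀ᶠ k in atTop, dist ((l k ^ θ)⁻¹ • a k) y < ε := Metric.tendsto_nhds.1 hlim ε hε
  rcases le_total θ 0 with hnonpos | hnonneg
  · obtain ⟨k, hk⟩ := hclose.exists
    filter_upwards [eventually_ge_atTop (l k)] with u hu
    exact ⟨a k, ha k, l k ^ θ, Real.rpow_le_rpow_of_nonpos (hl k) hu hnonpos, hk⟩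
  · filter_upwards [eventually_ge_atTop 0] with u hu
    obtain ⟨k, hk, huk⟩ := (hclose.and (hl_top.eventually_ge_atTop u)).exists
    exact ⟨a k, ha k, l k ^ θ, Real.rpow_le_rpow hu huk hnonneg, hk⟩

-- `x` is a convex combination of a point that approximates `y` at a scale `s ≥ u ^ θ` and one that
-- is negligible at scale `u ^ θ`.
lemma eventually_exists_dist_inv_rpow_smul_lt (hA : Convex ℝ A) (hθ : θ ≠ 0)
    (hy : y ∈ asymCone A θ) {ε : ℝ} (hε : 0 < ε) :
    ∀ᶠ u : ℝ in atTop, ∃ x ∈ A, dist ((u ^ θ)⁻¹ • x) y < ε := by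
  filter_upwards [eventually_gt_atTop 0, eventually_exists_rpow_le_and_dist_lt hy (half_pos hε),
    eventually_exists_norm_inv_rpow_smul_lt hθ hy (half_pos hε)]
    with u hu ⟨a, ha, s, hus, hay⟩ ⟨b, hb, hb_norm⟩
  have huθ : 0 < u ^ θ := Real.rpow_pos_of_pos hu θ
  obtain ⟨x, hx, hx_eq⟩ := exists_mem_inv_smul_eq_add_of_convex hA ha hb huθ hus
  have hweight : ‖1 - u ^ θ / s‖ ≤ 1 := by
    have hs : 0 < s := huθ.trans_le hus
    rw [Real.norm_of_nonneg (sub_nonneg.2 ((div_le_one hs).2 hus))]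
    exact sub_le_self _ (by positivity)
  refine ⟨x, hx, ?_⟩
  calc dist ((u ^ θ)⁻¹ • x) y
      = ‖s⁻¹ • a - y + (1 - u ^ θ / s) • (u ^ θ)⁻¹ • b‖ := by
        rw [hx_eq, dist_eq_norm, add_sub_right_comm]
    _ ≤ dist (s⁻¹ • a) y + ‖(1 - u ^ θ / s) • (u ^ θ)⁻¹ • b‖ := by
        rw [dist_eq_norm]; exact norm_add_le _ _
    _ ≤ dist (s⁻¹ • a) y + ‖(u ^ θ)⁻¹ • b‖ := by
        rw [norm_smul]; gcongr; exact mul_le_of_le_one_left (norm_nonneg _) hweight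
    _ < ε := by linarith

lemma exists_tendsto_of_mem_asymCone (hA : Convex ℝ A) (hθ : θ ≠ 0) (hy : y ∈ asymCone A θ) :
    ∃ xu : ℝ → Rn d, (∀ u, xu u ∈ A) ∧
      Tendsto (fun u : ℝ => (u ^ θ)⁻¹ • xu u) atTop (𝓝 y) :=
  exists_forall_mem_tendsto_of_eventually_exists_dist_lt (nonempty_of_mem_asymCone hy)
    fun _ => eventually_exists_dist_inv_rpow_smul_lt hA hθ hy

lemma zero_mem_asymCone (hθ : θ ≠ 0) (hne : (asymCone A θ).Nonempty) :
    (0 : Rn d) ∈ asymCone A θ := by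
  obtain ⟨y, hy⟩ := hne
  obtain ⟨xu, hxu, hlim⟩ := exists_forall_mem_tendsto_of_eventually_exists_dist_lt
    (f := fun u x => (u ^ θ)⁻¹ • x) (y := 0) (nonempty_of_mem_asymCone hy) fun ε hε => by
      simpa only [dist_zero_right] using eventually_exists_norm_inv_rpow_smul_lt hθ hy hε
  exact mem_asymCone_of_tendsto (fun u _ => hxu u) hlim

end AsymCone

namespace CondA1

variable {n m : ℕ} {X : Set (Rn n)} {Ξ : Set (Rn m)} {g : Rn n → Rn m → ℝ} {γ ρ : ℝ}
  {gs : Rn n → Rn m → ℝ} {y : Rn n} {w : Rn m}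

lemma map_rpow_smul_smul (hA1 : CondA1 X Ξ g γ ρ gs) (hX : Convex ℝ X) (hΞ : IsPosCone Ξ)
    (hγ : γ ≠ 0) (hy : y ∈ asymCone X γ) (hw : w ∈ Ξ) {t : ℝ} (ht : 0 < t) :
    gs (t ^ γ • y) (t • w) = t ^ ρ * gs y w := by
  obtain ⟨xu, hxu, hxu_lim⟩ := exists_tendsto_of_mem_asymCone hX hγ hy
  have hmul : Tendsto (fun u : ℝ => t * u) atTop atTop := tendsto_id.const_mul_atTop ht
  have hray (s : ℝ) : Tendsto (fun u : ℝ => u⁻¹ • (s * u) • w) atTop (𝓝 (s • w)) := by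
    refine tendsto_const_nhds.congr' ?_
    filter_upwards [eventually_ne_atTop 0] with u hu
    rw [mul_comm, mul_smul, inv_smul_smul₀ hu]
  have hxu_mul_lim :
      Tendsto (fun u : ℝ => (u ^ γ)⁻¹ • xu (t * u)) atTop (𝓝 (t ^ γ • y)) := by
    refine ((hxu_lim.comp hmul).const_smul (t ^ γ)).congr' ?_
    filter_upwards [eventually_ge_atTop 0] with u hu
    rw [Function.comp_apply, smul_smul, Real.mul_rpow ht.le hu, mul_inv,
      mul_inv_cancel_left₀ (Real.rpow_pos_of_pos ht γ).ne']
  have hlim : Tendsto (fun u => g (xu u) (u • w) / u ^ ρ) atTop (𝓝 (gs y w)) :=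
    hA1.2 y hy w hw xu (fun u => u • w) (fun u _ => hxu u) (fun u hu => hΞ u hu w hw) hxu_lim
      (by simpa only [one_mul, one_smul] using hray 1)
  have hlim_mul : Tendsto (fun u => g (xu (t * u)) ((t * u) • w) / u ^ ρ) atTop
      (𝓝 (gs (t ^ γ • y) (t • w))) :=
    hA1.2 _ (rpow_smul_mem_asymCone hy ht) _ (hΞ t ht w hw) (fun u => xu (t * u))
      (fun u => (t * u) • w) (fun u _ => hxu _) (fun u hu => hΞ _ (mul_pos ht hu) w hw)
      hxu_mul_lim (hray t)
  refine tendsto_nhds_unique hlim_mul (((hlim.comp hmul).const_mul (t ^ ρ)).congr' ?_)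
  filter_upwards [eventually_ge_atTop 0] with u hu
  rw [Function.comp_apply, Real.mul_rpow ht.le hu, mul_div_assoc',
    mul_div_mul_left _ _ (Real.rpow_pos_of_pos ht ρ).ne']

lemma apply_zero_zero_eq_apply_zero_right (hA1 : CondA1 X Ξ g γ 0 gs) (hX : Convex ℝ X)
    (hΞ : IsPosCone Ξ) (hΞ_zero : (0 : Rn m) ∈ Ξ) (hγ : γ ≠ 0) (hy : y ∈ asymCone X γ) :
    gs 0 0 = gs y 0 := by
  refine eq_of_continuousWithinAt_zero_of_forall_pos_smul (v := (y, (0 : Rn m)))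
    (hA1.1 0 ⟨zero_mem_asymCone hγ ⟨y, hy⟩, hΞ_zero⟩) (fun r hr => ?_) fun r hr => ?_
  · rw [Prod.smul_mk, smul_zero]
    exact ⟨smul_mem_asymCone hγ hy hr, hΞ_zero⟩
  · simpa only [Prod.smul_mk, smul_zero, Real.rpow_inv_rpow hr.le hγ, Real.rpow_zero, one_mul] using
      hA1.map_rpow_smul_smul hX hΞ hγ hy hΞ_zero (Real.rpow_pos_of_pos hr γ⁻¹)

lemma apply_zero_zero_eq_apply_zero_left (hA1 : CondA1 X Ξ g γ 0 gs) (hX : Convex ℝ X)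
    (hΞ : IsPosCone Ξ) (hΞ_zero : (0 : Rn m) ∈ Ξ) (hγ : γ ≠ 0)
    (hX_zero : (0 : Rn n) ∈ asymCone X γ) (hw : w ∈ Ξ) : gs 0 0 = gs 0 w := by
  refine eq_of_continuousWithinAt_zero_of_forall_pos_smul (v := ((0 : Rn n), w))
    (hA1.1 0 ⟨hX_zero, hΞ_zero⟩) (fun r hr => ?_) fun r hr => ?_
  · rw [Prod.smul_mk, smul_zero]
    exact ⟨hX_zero, hΞ r hr w hw⟩
  · simpa only [Prod.smul_mk, smul_zero, Real.rpow_zero, one_mul] using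
      hA1.map_rpow_smul_smul hX hΞ hγ hX_zero hw hr

end CondA1

theorem gstar_origin_zero_rho_general {n m : ℕ} {X : Set (Rn n)} {Ξ : Set (Rn m)}
    {g : Rn n → Rn m → ℝ} {γ : ℝ} {gs : Rn n → Rn m → ℝ} (hX : Convex ℝ X) (hΞ : IsPosCone Ξ)
    (hΞ_zero : (0 : Rn m) ∈ Ξ) (hγ : γ ≠ 0) (hA1 : CondA1 X Ξ g γ 0 gs)
    (hneg : ∃ y ∈ asymCone X γ, gs y 0 < 0) :
    (0 : Rn n) ∈ asymCone X γ ∧ ∀ w ∈ Ξ, gs 0 w < 0 := by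
  obtain ⟨y, hy, hy_neg⟩ := hneg
  have hX_zero : (0 : Rn n) ∈ asymCone X γ := zero_mem_asymCone hγ ⟨y, hy⟩
  refine ⟨hX_zero, fun w hw => ?_⟩
  calc gs 0 w = gs 0 0 :=
        (hA1.apply_zero_zero_eq_apply_zero_left hX hΞ hΞ_zero hγ hX_zero hw).symm
    _ = gs y 0 := hA1.apply_zero_zero_eq_apply_zero_right hX hΞ hΞ_zero hγ hy
    _ < 0 := hy_neg

/-- Under Assumption 2 with `ρ = 0`, the limit function is strictly negative at the
origin in the first argument, for every `w ∈ Ξ`. -/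
theorem gstar_origin_zero_rho {n m : ℕ} (X : Set (Rn n)) (Ξ : Set (Rn m))
    (g : Rn n → Rn m → ℝ) (γ ρ : ℝ) (gs : Rn n → Rn m → ℝ)
    (hA2 : Assumption2 X Ξ g γ ρ gs) (hρ : ρ = 0) :
    (0 : Rn n) ∈ asymCone X γ ∧ ∀ w ∈ Ξ, gs 0 w < 0 := by
  subst hρ
  obtain ⟨⟨-, -, hX, hΞ_ne, hΞ_closed, hΞ, -⟩, hγ, -, hA1, ⟨y, hy⟩, hA3, -⟩ := hA2
  exact gstar_origin_zero_rho_general hX hΞ (hΞ.zero_mem hΞ_closed hΞ_ne) hγ hA1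
    ⟨y, hy.1, hA3 y hy⟩
end
end

section
/- Suppose Assumption 1 holds for the Borel probability measure P on ℝ^m with support Ξ, scale function q, directional function λ, and tail index α > 0, and Assumption 2 holds for X ⊆ ℝ^n, the same closed cone Ξ, g, exponents (γ, ρ), and limit function g*. Define I(y) := inf{λ(w) : w ∈ Ξ, g*(y, w) ≥ 0}, with inf ∅ = +∞. Let (y_u)_{u>0} ⊆ ℝ^n be a family with u^γ y_u ∈ X for all u > 0 and y_u → y₀ ∈ X^∞_γ as u → ∞. Then liminf_{u→∞} log P({z ∈ ℝ^m : g(u^γ y_u, z) > 0}) / (−q(u)) ≥ I(y₀), with the convention log 0 = −∞. -/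
open Filter Topology MeasureTheory Set

noncomputable section

/-- `f : (0,∞) → (0,∞)` is regularly varying with index `κ`:
`f(uz)/f(u) → z^κ` as `u → ∞`, for every `z > 0`. -/
def RegVary (f : ℝ → ℝ) (κ : ℝ) : Prop :=
  (∀ u : ℝ, 0 < u → 0 < f u) ∧
  ∀ z : ℝ, 0 < z → Tendsto (fun u : ℝ => f (u * z) / f u) atTop (𝓝 (z ^ κ))

/-- `f ∈ MRV(Z, h, f*)` (multivariate regular variation on the cone `Z`), except
for the requirement `h ∈ RV(κ)` which is stated separately: `f, f* : Z → [0,∞)`,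
`f*` continuous on `Z`, and `f(u • z_u)/h(u) → f*(z)` whenever `z_u → z` in `Z`. -/
def MultiRegVary {d : ℕ} (Z : Set (Rn d)) (f : Rn d → ℝ) (h : ℝ → ℝ)
    (fstar : Rn d → ℝ) : Prop :=
  (∀ z ∈ Z, 0 ≤ f z) ∧ (∀ z ∈ Z, 0 ≤ fstar z) ∧ ContinuousOn fstar Z ∧
  ∀ z ∈ Z, ∀ zu : ℝ → Rn d, (∀ u : ℝ, 0 < u → zu u ∈ Z) →
    Tendsto zu atTop (𝓝 z) →
    Tendsto (fun u : ℝ => f (u • zu u) / h u) atTop (𝓝 (fstar z))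

/-- Assumption 1: `P` is a Borel probability measure on `ℝ^m` whose support is the
nonempty closed cone `Ξ`, with density `exp (-Q z)` on `Ξ` (and `0` outside) w.r.t.
Lebesgue measure, `Q ∈ MRV(Ξ, q, lam)` with `q ∈ RV(α)`, `α > 0`, and `lam > 0`
on unit vectors of `Ξ`. -/
def Assumption1 {d : ℕ} (P : Measure (Rn d)) (Ξ : Set (Rn d))
    (Q : Rn d → ℝ) (q : ℝ → ℝ) (lam : Rn d → ℝ) (α : ℝ) : Prop :=
  IsProbabilityMeasure P ∧
  Ξ.Nonempty ∧ IsClosed Ξ ∧ IsPosCone Ξ ∧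
  -- Ξ is the support of P: the smallest closed set of full measure
  P Ξ = 1 ∧ (∀ C : Set (Rn d), IsClosed C → P C = 1 → Ξ ⊆ C) ∧
  -- density of P w.r.t. Lebesgue measure
  P = volume.withDensity
    (fun z => ENNReal.ofReal (Ξ.indicator (fun z' => Real.exp (-(Q z'))) z)) ∧
  0 < α ∧ RegVary q α ∧ MultiRegVary Ξ Q q lam ∧
  (∀ z ∈ Ξ, ‖z‖ = 1 → 0 < lam z)

/-!
Suppose `λ > s` on the limiting violation set `{g* ≥ 0}`. Continuous convergence along families is
uniform on compact sets, so on the part of the violation set within distance `M u` of the origin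
`Q ≥ s q(u)` for large `u`. Homogeneity of `λ` gives the dilation inequality `Q z ≤ ε Q (K z)` far
out, with `K` so large that `ε K ^ α > 1`; it carries lower bounds for `Q` from a spherical shell to
everything outside, so `Q ≥ s q(u)` on the whole violation set.

To turn this pointwise bound into a bound on the probability, split
`exp (-Q) = exp (-(1 - ε) Q) exp (-ε Q)`. The first factor is at most `exp (-(1 - ε) s q(u))`; the
second is integrable, because by the dilation inequality its rescaling by `K` is dominated far out
by `exp (-Q)`. Since `λ 0 = 0` forces `g* 0 < 0`, every point eventually leaves the violation set,
whose mass under the finite measure `exp (-ε Q)` therefore tends to zero, and no volume growth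
enters the estimate.
-/

section ContinuousConvergence

variable {ι E β : Type*} [TopologicalSpace E]

lemma tendsto_extend_const_nhds [LinearOrder ι] {us : ℕ → ι} (hus : StrictMono us)
    {ws : ℕ → E} {w : E} (hws : Tendsto ws atTop (𝓝 w)) :
    Tendsto (Function.extend us ws fun _ => w) atTop (𝓝 w) := by
  refine fun V hV => mem_map.2 ?_
  obtain ⟨N, hN⟩ := mem_atTop_sets.1 (hws hV)
  filter_upwards [eventually_ge_atTop (us N)] with u hu
  by_cases hur : ∃ n, us n = u
  · obtain ⟨n, rfl⟩ := hur
    rw [mem_preimage, hus.injective.extend_apply]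
    exact hN n (hus.le_iff_le.1 hu)
  · rw [mem_preimage, Function.extend_apply' _ _ _ hur]
    exact mem_of_mem_nhds hV

lemma tendsto_uncurry_of_forall_tendsto_comp [LinearOrder ι] [NoMaxOrder ι]
    [(atTop : Filter ι).IsCountablyGenerated] [FirstCountableTopology E]
    {S : Set E} {w : E} (hw : w ∈ S) {F : ι → E → β} {l : Filter β}
    (h : ∀ wu : ι → E, (∀ u, wu u ∈ S) → Tendsto wu atTop (𝓝 w) →
      Tendsto (fun u => F u (wu u)) atTop l) :
    Tendsto (Function.uncurry F) (atTop ×ˢ 𝓝[S] w) l := by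
  refine tendsto_of_subseq_tendsto fun p hp => ?_
  obtain ⟨hu, hwp⟩ := tendsto_prod_iff'.1 hp
  obtain ⟨hlim, hmem⟩ := tendsto_nhdsWithin_iff.1 hwp
  obtain ⟨N, hN⟩ := eventually_atTop.1 hmem
  have hadd : Tendsto (fun n => n + N) atTop atTop := tendsto_add_atTop_nat N
  obtain ⟨φ, hφ, hmono⟩ := strictMono_subseq_of_tendsto_atTop (hu.comp hadd)
  -- A family indexed by all of `ι` that passes through a subsequence of `p`.
  let wu : ι → E := Function.extend (fun n => (p (φ n + N)).1) (fun n => (p (φ n + N)).2) fun _ => w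
  have hwu_eq (n : ℕ) : wu (p (φ n + N)).1 = (p (φ n + N)).2 := hmono.injective.extend_apply ..
  have hwu_mem (u : ι) : wu u ∈ S := by
    by_cases hur : ∃ n, (p (φ n + N)).1 = u
    · obtain ⟨n, rfl⟩ := hur
      exact hwu_eq n ▸ hN _ (Nat.le_add_left ..)
    · rw [show wu u = w from Function.extend_apply' _ _ _ hur]
      exact hw
  have hwu_lim : Tendsto wu atTop (𝓝 w) :=
    tendsto_extend_const_nhds hmono (hlim.comp (hadd.comp hφ.tendsto_atTop))
  refine ⟨fun n => φ n + N, ((h wu hwu_mem hwu_lim).comp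
    (hu.comp (hadd.comp hφ.tendsto_atTop))).congr fun n => ?_⟩
  exact congrArg (F _) (hwu_eq n)

lemma eventually_forall_mem_of_isCompact {l : Filter ι} {K S : Set E} (hK : IsCompact K)
    (hKS : K ⊆ S) {R : ι → E → Prop} (h : ∀ w ∈ K, ∀ᶠ p in l ×ˢ 𝓝[S] w, R p.1 p.2) :
    ∀ᶠ u in l, ∀ w ∈ K, R u w := by
  refine hK.induction_on (p := fun t => ∀ᶠ u in l, ∀ w ∈ t, R u w) (by simp)
    (fun s t hst ht => ht.mono fun u hu w hw => hu w (hst hw)) ?_ fun w hw => ?_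
  · intro s t hs ht
    filter_upwards [hs, ht] with u hus hut w hw using hw.elim (hus w) (hut w)
  · obtain ⟨pu, hpu, pw, hpw, hR⟩ := eventually_prod_iff.1 (h w hw)
    exact ⟨{w' | pw w'}, nhdsWithin_mono w hKS hpw, hpu.mono fun u hu w' hw' => hR hu hw'⟩

end ContinuousConvergence

section NormedSpace

variable {E : Type*} [NormedAddCommGroup E]

lemma isCompact_inter_norm_preimage_Icc [ProperSpace E] {Z : Set E} (hZ : IsClosed Z) (a b : ℝ) :
    IsCompact (Z ∩ norm ⁻¹' Icc a b) :=
  Metric.isCompact_of_isClosed_isBounded (hZ.inter (isClosed_Icc.preimage continuous_norm))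
    (Metric.isBounded_closedBall.subset fun _ hw => mem_closedBall_zero_iff.2 hw.2.2)

variable [NormedSpace ℝ E]

lemma tendsto_inv_smul_atTop (z : E) : Tendsto (fun u : ℝ => u⁻¹ • z) atTop (𝓝 0) := by
  simpa using (tendsto_inv_atTop_zero (𝕜 := ℝ)).smul_const z

lemma norm_inv_smul_of_pos {c : ℝ} (hc : 0 < c) (z : E) : ‖c⁻¹ • z‖ = ‖z‖ / c := by
  rw [norm_smul, norm_inv, Real.norm_of_nonneg hc.le, inv_mul_eq_div]

end NormedSpace

section Cone

variable {d : ℕ} {Z : Set (Rn d)}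

namespace IsPosCone

lemma smul_mem_iff (hZ : IsPosCone Z) {c : ℝ} (hc : 0 < c) {z : Rn d} : c • z ∈ Z ↔ z ∈ Z :=
  ⟨fun h => by simpa [smul_smul, inv_mul_cancel₀ hc.ne'] using hZ c⁻¹ (inv_pos.2 hc) _ h, hZ c hc z⟩

lemma zero_mem_s17 (hZ : IsPosCone Z) (hcl : IsClosed Z) (hne : Z.Nonempty) : (0 : Rn d) ∈ Z := by
  obtain ⟨z, hz⟩ := hne
  exact hcl.mem_of_tendsto (tendsto_inv_smul_atTop z)
    ((eventually_gt_atTop 0).mono fun u hu => hZ _ (inv_pos.2 hu) z hz)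

lemma le_of_le_on_annulus (hZ : IsPosCone Z) {f : Rn d → ℝ} {K u b : ℝ} (hK : 1 < K) (hu : 0 < u)
    (hmono : ∀ z ∈ Z, u ≤ ‖z‖ → f z ≤ f (K • z))
    (hb : ∀ z ∈ Z, u ≤ ‖z‖ → ‖z‖ ≤ K * u → b ≤ f z) :
    ∀ z ∈ Z, u ≤ ‖z‖ → b ≤ f z := by
  have hK0 : 0 < K := one_pos.trans hK
  have hshell (i : ℕ) : ∀ z ∈ Z, u ≤ ‖z‖ → ‖z‖ ≤ K ^ (i + 1) * u → b ≤ f z := by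
    induction i with
    | zero => simpa using hb
    | succ i ih =>
      intro z hz huz hzi
      rcases le_total ‖z‖ (K * u) with hle | hle
      · exact hb z hz huz hle
      have hz' : K⁻¹ • z ∈ Z := hZ _ (inv_pos.2 hK0) z hz
      have hlow : u ≤ ‖K⁻¹ • z‖ := by rwa [norm_inv_smul_of_pos hK0, le_div_iff₀' hK0]
      have hupp : ‖K⁻¹ • z‖ ≤ K ^ (i + 1) * u := by
        rwa [norm_inv_smul_of_pos hK0, div_le_iff₀' hK0, ← mul_assoc, ← pow_succ']
      simpa [smul_smul, mul_inv_cancel₀ hK0.ne'] using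
        (ih _ hz' hlow hupp).trans (hmono _ hz' hlow)
  intro z hz huz
  obtain ⟨i, -, hi⟩ := exists_nat_pow_near ((one_le_div hu).2 huz) hK
  exact hshell i z hz huz ((div_lt_iff₀ hu).1 hi).le

lemma eventually_forall_of_norm_mem_Icc (hZ : IsPosCone Z) (hcl : IsClosed Z)
    {R : ℝ → Rn d → Prop} {a b : ℝ}
    (h : ∀ w ∈ Z, ‖w‖ ∈ Icc a b → ∀ᶠ p in atTop ×ˢ 𝓝[Z] w, R p.1 (p.1 • p.2)) :
    ∀ᶠ u in atTop, ∀ z ∈ Z, ‖z‖ ∈ Icc (a * u) (b * u) → R u z := by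
  filter_upwards [eventually_gt_atTop 0, eventually_forall_mem_of_isCompact
    (isCompact_inter_norm_preimage_Icc hcl a b) inter_subset_left (R := fun u w => R u (u • w))
    fun w hw => h w hw.1 hw.2] with u hu hR z hz hzn
  have hmem : u⁻¹ • z ∈ Z ∩ norm ⁻¹' Icc a b :=
    ⟨hZ _ (inv_pos.2 hu) z hz, by
      rw [mem_preimage, norm_inv_smul_of_pos hu]
      exact ⟨(le_div_iff₀ hu).2 hzn.1, (div_le_iff₀ hu).2 hzn.2⟩⟩
  simpa only [smul_smul, mul_inv_cancel₀ hu.ne', one_smul] using hR _ hmem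

end IsPosCone

end Cone

/-- The rescaled functions `w ↦ F u (u • w) / r u` converge to `f` continuously on `Z` as `u → ∞`,
that is, jointly in `u` and in the point `w ∈ Z`. Both multivariate regular variation and the
limit relation in (A1) are of this form. -/
def HasScalingLimit {d : ℕ} (Z : Set (Rn d)) (F : ℝ → Rn d → ℝ) (r : ℝ → ℝ) (f : Rn d → ℝ) : Prop :=
  ∀ w ∈ Z, Tendsto (fun p : ℝ × Rn d => F p.1 (p.1 • p.2) / r p.1) (atTop ×ˢ 𝓝[Z] w) (𝓝 (f w))

section ScalingLimit

variable {d : ℕ} {Z : Set (Rn d)}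

lemma MultiRegVary.hasScalingLimit {f fstar : Rn d → ℝ} {h : ℝ → ℝ}
    (hf : MultiRegVary Z f h fstar) : HasScalingLimit Z (fun _ => f) h fstar := by
  obtain ⟨-, -, -, hlim⟩ := hf
  exact fun w hw => tendsto_uncurry_of_forall_tendsto_comp (F := fun u z => f (u • z) / h u) hw
    fun wu hwu => hlim w hw wu fun u _ => hwu u

lemma CondA1.hasScalingLimit {n : ℕ} {X : Set (Rn n)} {g gs : Rn n → Rn d → ℝ} {γ ρ : ℝ}
    (hg : CondA1 X Z g γ ρ gs) (hZ : IsPosCone Z) {yu : ℝ → Rn n} {y₀ : Rn n}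
    (hyuX : ∀ u : ℝ, 0 < u → (u ^ γ) • yu u ∈ X) (hy₀ : y₀ ∈ asymCone X γ)
    (hyconv : Tendsto yu atTop (𝓝 y₀)) :
    HasScalingLimit Z (fun u => g ((u ^ γ) • yu u)) (fun u => u ^ ρ) (gs y₀) := by
  intro w hw
  refine tendsto_uncurry_of_forall_tendsto_comp
    (F := fun u z => g ((u ^ γ) • yu u) (u • z) / u ^ ρ) hw fun wu hwu hlim => ?_
  refine hg.2 y₀ hy₀ w hw _ _ hyuX (fun u hu => hZ u hu _ (hwu u)) (hyconv.congr' ?_)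
    (hlim.congr' ?_) <;>
  filter_upwards [eventually_gt_atTop 0] with u hu
  · rw [smul_smul, inv_mul_cancel₀ (Real.rpow_pos_of_pos hu _).ne', one_smul]
  · rw [smul_smul, inv_mul_cancel₀ hu.ne', one_smul]

namespace HasScalingLimit

variable {F G : ℝ → Rn d → ℝ} {r ρ : ℝ → ℝ} {f gs : Rn d → ℝ}

lemma tendsto_apply (hF : HasScalingLimit Z F r f) (hZ : IsPosCone Z) (h0 : (0 : Rn d) ∈ Z)
    {z : Rn d} (hz : z ∈ Z) : Tendsto (fun u => F u z / r u) atTop (𝓝 (f 0)) := by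
  have hlim : Tendsto (fun u : ℝ => u⁻¹ • z) atTop (𝓝[Z] 0) := by
    refine tendsto_nhdsWithin_iff.2 ⟨tendsto_inv_smul_atTop z, ?_⟩
    filter_upwards [eventually_gt_atTop 0] with u hu using hZ _ (inv_pos.2 hu) z hz
  refine ((hF 0 h0).comp (tendsto_id.prodMk hlim)).congr' ?_
  filter_upwards [eventually_gt_atTop 0] with u hu
  simp [smul_smul, mul_inv_cancel₀ hu.ne']

lemma eventually_notMem_pos_inter (hF : HasScalingLimit Z F r f) (hr : ∀ u, 0 < u → 0 < r u)
    (hZ : IsPosCone Z) (h0 : (0 : Rn d) ∈ Z) (hf : f 0 < 0) (z : Rn d) :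
    ∀ᶠ u in atTop, z ∉ {z | 0 < F u z} ∩ Z := by
  by_cases hz : z ∈ Z
  · filter_upwards [(hF.tendsto_apply hZ h0 hz).eventually_lt_const hf, eventually_gt_atTop 0]
      with u hu hu0 hmem using hu.not_gt (div_pos hmem.1 (hr u hu0))
  · exact Eventually.of_forall fun u hmem => hz hmem.2

lemma eventually_mul_le (hF : HasScalingLimit Z F r f) (hr : ∀ u, 0 < u → 0 < r u)
    {w : Rn d} (hw : w ∈ Z) {c : ℝ} (hc : c < f w) :
    ∀ᶠ p in atTop ×ˢ 𝓝[Z] w, c * r p.1 ≤ F p.1 (p.1 • p.2) := by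
  filter_upwards [(hF w hw).eventually_const_lt hc, tendsto_fst.eventually (eventually_gt_atTop 0)]
    with p hp hp0 using ((lt_div_iff₀ (hr _ hp0)).1 hp).le

lemma eventually_mul_le_of_pos (hF : HasScalingLimit Z F r f) (hr : ∀ u, 0 < u → 0 < r u)
    (hG : HasScalingLimit Z G ρ gs) (hρ : ∀ u, 0 < u → 0 < ρ u) {w : Rn d} (hw : w ∈ Z) {c : ℝ}
    (hc : 0 ≤ gs w → c < f w) :
    ∀ᶠ p in atTop ×ˢ 𝓝[Z] w, 0 < G p.1 (p.1 • p.2) → c * r p.1 ≤ F p.1 (p.1 • p.2) := by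
  rcases le_or_gt 0 (gs w) with hgw | hgw
  · exact (hF.eventually_mul_le hr hw (hc hgw)).mono fun p hp _ => hp
  · filter_upwards [(hG w hw).eventually_lt_const hgw,
      tendsto_fst.eventually (eventually_gt_atTop 0)] with p hp hp0 hpos
    exact absurd hp (div_pos hpos (hρ _ hp0)).not_gt

end HasScalingLimit

end ScalingLimit

section RegularVariation

variable {d : ℕ} {Z : Set (Rn d)} {Q lam : Rn d → ℝ} {q : ℝ → ℝ} {α : ℝ}

namespace MultiRegVary

lemma limit_smul (hQ : MultiRegVary Z Q q lam) (hq : RegVary q α) (hZ : IsPosCone Z) {c : ℝ}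
    (hc : 0 < c) {z : Rn d} (hz : z ∈ Z) : lam (c • z) = c ^ α * lam z := by
  obtain ⟨-, -, -, hlim⟩ := hQ
  have hcz : Tendsto (fun u => Q (u • c • z) / q u) atTop (𝓝 (lam (c • z))) :=
    hlim _ (hZ c hc z hz) (fun _ => c • z) (fun _ _ => hZ c hc z hz) tendsto_const_nhds
  have hz' : Tendsto (fun u => Q ((u * c) • z) / q (u * c)) atTop (𝓝 (lam z)) :=
    (hlim z hz (fun _ => z) (fun _ _ => hz) tendsto_const_nhds).comp
      (tendsto_id.atTop_mul_const hc)
  refine tendsto_nhds_unique hcz (((hq.2 c hc).mul hz').congr' ?_)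
  filter_upwards [eventually_gt_atTop 0] with u hu
  rw [smul_smul, mul_comm, div_mul_div_cancel₀ (hq.1 _ (mul_pos hu hc)).ne']

lemma limit_zero (hQ : MultiRegVary Z Q q lam) (hq : RegVary q α) (hα : 0 < α) (hZ : IsPosCone Z)
    (h0 : (0 : Rn d) ∈ Z) : lam 0 = 0 := by
  have htwo : lam 0 = 2 ^ α * lam 0 := by
    simpa only [smul_zero] using hQ.limit_smul hq hZ two_pos h0
  have hgt : (1 : ℝ) < 2 ^ α := Real.one_lt_rpow one_lt_two hα
  exact (mul_eq_zero.1 (show (2 ^ α - 1) * lam 0 = 0 by linarith)).resolve_left (by linarith)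

lemma limit_pos (hQ : MultiRegVary Z Q q lam) (hq : RegVary q α) (hZ : IsPosCone Z)
    (hlam : ∀ z ∈ Z, ‖z‖ = 1 → 0 < lam z) {z : Rn d} (hz : z ∈ Z) (hz0 : z ≠ 0) : 0 < lam z := by
  have hn : 0 < ‖z‖ := norm_pos_iff.2 hz0
  have hdir : ‖z‖⁻¹ • z ∈ Z := hZ _ (inv_pos.2 hn) z hz
  rw [← smul_inv_smul₀ hn.ne' z, hQ.limit_smul hq hZ hn hdir]
  exact mul_pos (Real.rpow_pos_of_pos hn α) (hlam _ hdir (norm_smul_inv_norm (𝕜 := ℝ) hz0))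

lemma hasScalingLimit_comp_smul (hQ : MultiRegVary Z Q q lam) (hq : RegVary q α)
    (hZ : IsPosCone Z) {c : ℝ} (hc : 0 < c) :
    HasScalingLimit Z (fun _ z => Q (c • z)) q (fun w => c ^ α * lam w) := by
  intro w hw
  beta_reduce
  rw [← hQ.limit_smul hq hZ hc hw]
  have hsmul : Tendsto (fun p : ℝ × Rn d => c • p.2) (atTop ×ˢ 𝓝[Z] w) (𝓝[Z] (c • w)) :=
    ((continuous_const_smul c).continuousWithinAt.tendsto_nhdsWithin (hZ c hc)).comp tendsto_snd
  refine ((hQ.hasScalingLimit _ (hZ c hc w hw)).comp (tendsto_fst.prodMk hsmul)).congr fun p => ?_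
  simp only [Function.comp_apply, smul_comm c]

lemma exists_le_mul_comp_smul (hQ : MultiRegVary Z Q q lam) (hq : RegVary q α) (hα : 0 < α)
    (hcl : IsClosed Z) (hZ : IsPosCone Z) (hlam : ∀ z ∈ Z, ‖z‖ = 1 → 0 < lam z) {ε : ℝ}
    (hε : 0 < ε) :
    ∃ K > (1 : ℝ), ∃ u₀, ∀ z ∈ Z, u₀ ≤ ‖z‖ → Q z ≤ ε * Q (K • z) := by
  obtain ⟨K, hKε, hK⟩ := (((tendsto_rpow_atTop hα).eventually_gt_atTop ε⁻¹).and
    (eventually_gt_atTop 1)).exists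
  have hgain : 0 < ε * K ^ α - 1 := sub_pos.2 ((inv_lt_iff_one_lt_mul₀' hε).1 hKε)
  have hdiff : HasScalingLimit Z (fun _ z => ε * Q (K • z) - Q z) q
      (fun w => ε * (K ^ α * lam w) - lam w) := fun w hw =>
    ((((hQ.hasScalingLimit_comp_smul hq hZ (one_pos.trans hK)) w hw).const_mul ε).sub
      (hQ.hasScalingLimit w hw)).congr fun p => by rw [sub_div, mul_div_assoc]
  have hsphere : ∀ᶠ u in atTop, ∀ z ∈ Z, ‖z‖ ∈ Icc (1 * u) (1 * u) →
      0 * q u ≤ ε * Q (K • z) - Q z := by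
    refine hZ.eventually_forall_of_norm_mem_Icc hcl fun w hw hwn =>
      hdiff.eventually_mul_le hq.1 hw ?_
    have hw1 : ‖w‖ = 1 := le_antisymm hwn.2 hwn.1
    linarith [mul_pos hgain (hlam w hw hw1)]
  obtain ⟨u₀, hu₀⟩ := eventually_atTop.1 hsphere
  exact ⟨K, hK, u₀, fun z hz hzn => by simpa using hu₀ ‖z‖ hzn z hz (by simp)⟩

lemma exists_mul_le_of_le_norm (hQ : MultiRegVary Z Q q lam) (hq : RegVary q α) (hα : 0 < α)
    (hcl : IsClosed Z) (hZ : IsPosCone Z) (hlam : ∀ z ∈ Z, ‖z‖ = 1 → 0 < lam z) :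
    ∃ c > (0 : ℝ), ∀ᶠ u in atTop, ∀ z ∈ Z, u ≤ ‖z‖ → c * q u ≤ Q z := by
  obtain ⟨K, hK, u₀, hdil⟩ := hQ.exists_le_mul_comp_smul hq hα hcl hZ hlam one_pos
  have hpos : ∀ w ∈ Z ∩ norm ⁻¹' Icc 1 K, 0 < lam w := fun w hw =>
    hQ.limit_pos hq hZ hlam hw.1 (norm_pos_iff.1 (one_pos.trans_le hw.2.1))
  obtain ⟨c, hc, hcle⟩ := (isCompact_inter_norm_preimage_Icc hcl 1 K).exists_forall_le'
    (hQ.2.2.1.mono inter_subset_left) hpos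
  refine ⟨c / 2, half_pos hc, ?_⟩
  have hshell : ∀ᶠ u in atTop, ∀ z ∈ Z, ‖z‖ ∈ Icc (1 * u) (K * u) → c / 2 * q u ≤ Q z :=
    hZ.eventually_forall_of_norm_mem_Icc hcl fun w hw hwn =>
      hQ.hasScalingLimit.eventually_mul_le hq.1 hw ((half_lt_self hc).trans_le (hcle w ⟨hw, hwn⟩))
  filter_upwards [hshell, eventually_ge_atTop u₀, eventually_gt_atTop 0] with u hu hu₀ hu0
  refine hZ.le_of_le_on_annulus hK hu0 (fun z hz hzn => ?_)
    fun z hz hzl hzu => hu z hz ⟨by rwa [one_mul], hzu⟩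
  simpa only [one_mul] using hdil z hz (hu₀.trans hzn)

lemma exists_mul_le_of_mul_le_norm (hQ : MultiRegVary Z Q q lam) (hq : RegVary q α) (hα : 0 < α)
    (hcl : IsClosed Z) (hZ : IsPosCone Z) (hlam : ∀ z ∈ Z, ‖z‖ = 1 → 0 < lam z) {s : ℝ}
    (hs : 0 < s) :
    ∃ M : ℝ, ∀ᶠ u in atTop, ∀ z ∈ Z, M * u ≤ ‖z‖ → s * q u ≤ Q z := by
  obtain ⟨c, hc, hfar⟩ := hQ.exists_mul_le_of_le_norm hq hα hcl hZ hlam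
  obtain ⟨K, hK, u₀, hdil⟩ := hQ.exists_le_mul_comp_smul hq hα hcl hZ hlam (div_pos hc hs)
  have hK0 : 0 < K := one_pos.trans hK
  refine ⟨K, ?_⟩
  filter_upwards [hfar, eventually_ge_atTop u₀] with u hu hu₀ z hz hzn
  have hz' : K⁻¹ • z ∈ Z := hZ _ (inv_pos.2 hK0) z hz
  have hlow : u ≤ ‖K⁻¹ • z‖ := by rwa [norm_inv_smul_of_pos hK0, le_div_iff₀' hK0]
  have hbound : c * q u ≤ c / s * Q z := by
    simpa only [smul_inv_smul₀ hK0.ne'] using (hu _ hz' hlow).trans (hdil _ hz' (hu₀.trans hlow))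
  rwa [div_mul_eq_mul_div, le_div_iff₀ hs, mul_assoc, mul_le_mul_iff_right₀ hc, mul_comm] at hbound

lemma eventually_mul_le_of_pos (hQ : MultiRegVary Z Q q lam) (hq : RegVary q α) (hα : 0 < α)
    (hcl : IsClosed Z) (hZ : IsPosCone Z) (hlam : ∀ z ∈ Z, ‖z‖ = 1 → 0 < lam z)
    {G : ℝ → Rn d → ℝ} {ρ : ℝ → ℝ} {gs : Rn d → ℝ} (hG : HasScalingLimit Z G ρ gs)
    (hρ : ∀ u, 0 < u → 0 < ρ u) {s : ℝ} (hs : 0 < s) (hgs : ∀ w ∈ Z, 0 ≤ gs w → s < lam w) :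
    ∀ᶠ u in atTop, ∀ z ∈ Z, 0 < G u z → s * q u ≤ Q z := by
  obtain ⟨M, hfar⟩ := hQ.exists_mul_le_of_mul_le_norm hq hα hcl hZ hlam hs
  have hnear : ∀ᶠ u in atTop, ∀ z ∈ Z, ‖z‖ ∈ Icc (0 * u) (M * u) → 0 < G u z → s * q u ≤ Q z :=
    hZ.eventually_forall_of_norm_mem_Icc hcl fun w hw _ =>
      hQ.hasScalingLimit.eventually_mul_le_of_pos hq.1 hG hρ hw (hgs w hw)
  filter_upwards [hnear, hfar] with u hnear hfar z hz hpos
  rcases le_total ‖z‖ (M * u) with hle | hle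
  · exact hnear z hz ⟨by simp, hle⟩ hpos
  · exact hfar z hz hle

end MultiRegVary

end RegularVariation

section GibbsMeasure

/-- The measure with density `exp (-Q)` with respect to `μ`. It is not normalised, so that both the
law in Assumption 1 and its tempered versions, with `Q` replaced by `ε * Q`, are of this form. -/
def gibbsMeasure {E : Type*} [MeasurableSpace E] (μ : Measure E) (Q : E → ℝ) : Measure E :=
  μ.withDensity fun z => ENNReal.ofReal (Real.exp (-Q z))

lemma withDensity_indicator_exp_neg {E : Type*} [MeasurableSpace E] (μ : Measure E) {Z : Set E}
    (hZ : MeasurableSet Z) (Q : E → ℝ) :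
    μ.withDensity (fun z => ENNReal.ofReal (Z.indicator (fun z' => Real.exp (-Q z')) z)) =
      gibbsMeasure (μ.restrict Z) Q := by
  rw [gibbsMeasure, ← withDensity_indicator hZ]
  congr 1 with z
  by_cases hz : z ∈ Z <;> simp [hz]

lemma gibbsMeasure_restrict_inter {E : Type*} [MeasurableSpace E] (μ : Measure E) {Z : Set E}
    (hZ : MeasurableSet Z) (Q : E → ℝ) (A : Set E) :
    gibbsMeasure (μ.restrict Z) Q (A ∩ Z) = gibbsMeasure (μ.restrict Z) Q A := by
  refine measure_inter_conull (withDensity_absolutelyContinuous _ _ ?_)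
  rw [Measure.restrict_apply hZ.compl, compl_inter_self, measure_empty]

lemma gibbsMeasure_le_exp_mul {E : Type*} [MeasurableSpace E] (μ : Measure E) {Q : E → ℝ}
    {A : Set E} (hA : MeasurableSet A) {ε b : ℝ} (hε : ε ≤ 1) (hb : ∀ z ∈ A, b ≤ Q z) :
    gibbsMeasure μ Q A ≤ ENNReal.ofReal (Real.exp (-((1 - ε) * b))) *
      gibbsMeasure μ (fun z => ε * Q z) A := by
  rw [gibbsMeasure, gibbsMeasure, withDensity_apply _ hA, withDensity_apply _ hA,
    ← lintegral_const_mul' _ _ ENNReal.ofReal_ne_top]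
  refine setLIntegral_mono' hA fun z hz => ?_
  rw [← ENNReal.ofReal_mul (Real.exp_nonneg _), ← Real.exp_add]
  refine ENNReal.ofReal_le_ofReal (Real.exp_le_exp.2 ?_)
  linarith [mul_le_mul_of_nonneg_left (hb z hz) (sub_nonneg.2 hε)]

lemma tendsto_measure_zero_of_eventually_notMem {E ι : Type*} [MeasurableSpace E] (μ : Measure E)
    [IsFiniteMeasure μ] {l : Filter ι} [l.IsCountablyGenerated] {A : ι → Set E}
    (hA : ∀ᶠ i in l, MeasurableSet (A i)) (h : ∀ z, ∀ᶠ i in l, z ∉ A i) :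
    Tendsto (fun i => μ (A i)) l (𝓝 0) := by
  classical
  let B : ι → Set E := fun i => if MeasurableSet (A i) then A i else ∅
  have hB (i : ι) : MeasurableSet (B i) := by
    by_cases hi : MeasurableSet (A i) <;> simp [B, hi]
  have hBA : B =ᶠ[l] A := hA.mono fun i hi => if_pos hi
  have hlim : Tendsto (fun i => μ (B i)) l (𝓝 (μ ∅)) := by
    refine tendsto_measure_of_tendsto_indicator_of_isFiniteMeasure l μ hB fun z => ?_
    filter_upwards [h z, hBA] with i hi hBi
    simpa only [hBi, mem_empty_iff_false, iff_false] using hi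
  rw [measure_empty] at hlim
  exact hlim.congr' (hBA.mono fun i hi => congrArg μ hi)

variable {d : ℕ} {Z : Set (Rn d)} {Q lam : Rn d → ℝ} {q : ℝ → ℝ} {α : ℝ}

lemma IsPosCone.setLIntegral_comp_smul (hZ : IsPosCone Z) {c : ℝ} (hc : 0 < c)
    (f : Rn d → ENNReal) :
    ∫⁻ z in Z, f (c • z) = ENNReal.ofReal |(c ^ d)⁻¹| * ∫⁻ z in Z, f z := by
  have hemb : MeasurableEmbedding fun z : Rn d => c • z := measurableEmbedding_const_smul₀ hc.ne'
  have hpre : (fun z : Rn d => c • z) ⁻¹' Z = Z := Set.ext fun z => hZ.smul_mem_iff hc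
  calc ∫⁻ z in Z, f (c • z)
      = ∫⁻ z, f z ∂(volume.restrict ((fun z : Rn d => c • z) ⁻¹' Z)).map (c • ·) := by
        rw [hpre, hemb.lintegral_map]
    _ = ENNReal.ofReal |(c ^ d)⁻¹| * ∫⁻ z in Z, f z := by
        rw [← hemb.restrict_map, Measure.map_addHaar_smul volume hc.ne', Measure.restrict_smul,
          lintegral_smul_measure, finrank_euclideanSpace_fin, smul_eq_mul]

lemma IsPosCone.isFiniteMeasure_gibbsMeasure_mul (hZ : IsPosCone Z) (hmeas : MeasurableSet Z)
    [IsFiniteMeasure (gibbsMeasure (volume.restrict Z) Q)] (hQ : ∀ z ∈ Z, 0 ≤ Q z)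
    {ε K u₀ : ℝ} (hε : 0 ≤ ε) (hK : 0 < K)
    (hdil : ∀ z ∈ Z, u₀ ≤ ‖z‖ → Q z ≤ ε * Q (K • z)) :
    IsFiniteMeasure (gibbsMeasure (volume.restrict Z) fun z => ε * Q z) := by
  refine isFiniteMeasure_withDensity fun htop => ?_
  have hscaled := hZ.setLIntegral_comp_smul hK fun z => ENNReal.ofReal (Real.exp (-(ε * Q z)))
  rw [htop, ENNReal.mul_top (by positivity)] at hscaled
  let ball : Set (Rn d) := Metric.closedBall 0 u₀
  have hle : ∫⁻ z in Z, ENNReal.ofReal (Real.exp (-(ε * Q (K • z)))) ≤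
      ∫⁻ z in Z, (ball.indicator 1 z + ENNReal.ofReal (Real.exp (-Q z))) := by
    refine setLIntegral_mono' hmeas fun z hz => ?_
    rcases le_total ‖z‖ u₀ with hzu | hzu
    · rw [indicator_of_mem (mem_closedBall_zero_iff.2 hzu)]
      have hQK : 0 ≤ ε * Q (K • z) := mul_nonneg hε (hQ _ (hZ K hK z hz))
      exact le_add_right (ENNReal.ofReal_le_one.2 (Real.exp_le_one_iff.2 (neg_nonpos.2 hQK)))
    · exact le_add_left (ENNReal.ofReal_le_ofReal
        (Real.exp_le_exp.2 (neg_le_neg (hdil z hz hzu))))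
  have hball : ∫⁻ z in Z, ball.indicator 1 z ≠ ⊤ := by
    rw [lintegral_indicator_one measurableSet_closedBall]
    exact ((Measure.restrict_apply_le _ _).trans_lt measure_closedBall_lt_top).ne
  have hexp : ∫⁻ z in Z, ENNReal.ofReal (Real.exp (-Q z)) ≠ ⊤ := by
    simpa [gibbsMeasure] using measure_ne_top (gibbsMeasure (volume.restrict Z) Q) univ
  rw [hscaled, lintegral_add_left (measurable_one.indicator measurableSet_closedBall)] at hle
  exact ENNReal.add_ne_top.2 ⟨hball, hexp⟩ (top_le_iff.1 hle)

lemma MultiRegVary.isFiniteMeasure_gibbsMeasure_mul (hQ : MultiRegVary Z Q q lam)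
    (hq : RegVary q α) (hα : 0 < α) (hcl : IsClosed Z) (hZ : IsPosCone Z)
    (hlam : ∀ z ∈ Z, ‖z‖ = 1 → 0 < lam z) [IsFiniteMeasure (gibbsMeasure (volume.restrict Z) Q)]
    {ε : ℝ} (hε : 0 < ε) :
    IsFiniteMeasure (gibbsMeasure (volume.restrict Z) fun z => ε * Q z) := by
  obtain ⟨K, hK, u₀, hdil⟩ := hQ.exists_le_mul_comp_smul hq hα hcl hZ hlam hε
  exact hZ.isFiniteMeasure_gibbsMeasure_mul hcl.measurableSet hQ.1 hε.le (one_pos.trans hK) hdil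

lemma MultiRegVary.eventually_gibbsMeasure_le_exp (hQ : MultiRegVary Z Q q lam)
    (hq : RegVary q α) (hα : 0 < α) (hne : Z.Nonempty) (hcl : IsClosed Z) (hZ : IsPosCone Z)
    (hlam : ∀ z ∈ Z, ‖z‖ = 1 → 0 < lam z) [IsFiniteMeasure (gibbsMeasure (volume.restrict Z) Q)]
    {G : ℝ → Rn d → ℝ} {ρ : ℝ → ℝ} {gs : Rn d → ℝ} (hG : HasScalingLimit Z G ρ gs)
    (hρ : ∀ u, 0 < u → 0 < ρ u) (hmeas : ∀ u, 0 < u → MeasurableSet ({z | 0 < G u z} ∩ Z))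
    {s s' : ℝ} (hs : 0 < s) (hss' : s < s') (hgs : ∀ w ∈ Z, 0 ≤ gs w → s' < lam w) :
    ∀ᶠ u in atTop, gibbsMeasure (volume.restrict Z) Q {z | 0 < G u z} ≤
      ENNReal.ofReal (Real.exp (-(s * q u))) := by
  have hs' : 0 < s' := hs.trans hss'
  have h0 : (0 : Rn d) ∈ Z := hZ.zero_mem_s17 hcl hne
  set ε : ℝ := 1 - s / s' with hε
  have hε0 : 0 < ε := sub_pos.2 ((div_lt_one hs').2 hss')
  have hε1 : ε ≤ 1 := sub_le_self _ (div_pos hs hs').le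
  have hfin := hQ.isFiniteMeasure_gibbsMeasure_mul hq hα hcl hZ hlam hε0
  have hgs0 : gs 0 < 0 := lt_of_not_ge fun hge =>
    (hgs 0 h0 hge).not_gt (by rwa [hQ.limit_zero hq hα hZ h0])
  have hsmall := (tendsto_measure_zero_of_eventually_notMem
    (gibbsMeasure (volume.restrict Z) fun z => ε * Q z) ((eventually_gt_atTop 0).mono hmeas)
    (hG.eventually_notMem_pos_inter hρ hZ h0 hgs0)).eventually_le_const one_pos
  filter_upwards [hQ.eventually_mul_le_of_pos hq hα hcl hZ hlam hG hρ hs' hgs, hsmall,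
    eventually_gt_atTop 0] with u hlarge hsmall hu
  calc gibbsMeasure (volume.restrict Z) Q {z | 0 < G u z}
      = gibbsMeasure (volume.restrict Z) Q ({z | 0 < G u z} ∩ Z) :=
        (gibbsMeasure_restrict_inter _ hcl.measurableSet _ _).symm
    _ ≤ ENNReal.ofReal (Real.exp (-((1 - ε) * (s' * q u)))) *
          gibbsMeasure (volume.restrict Z) (fun z => ε * Q z) ({z | 0 < G u z} ∩ Z) :=
        gibbsMeasure_le_exp_mul _ (hmeas u hu) hε1 fun z hz => hlarge z hz.2 hz.1
    _ ≤ ENNReal.ofReal (Real.exp (-(s * q u))) := by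
        rw [hε, sub_sub_cancel, ← mul_assoc, div_mul_cancel₀ _ hs'.ne']
        exact mul_le_of_le_one_right' hsmall

end GibbsMeasure

lemma measurableSet_preimage_inter_of_continuousOn {E F : Type*} [TopologicalSpace E]
    [MeasurableSpace E] [OpensMeasurableSpace E] [TopologicalSpace F] {f : E → F} {Z : Set E}
    (hf : ContinuousOn f Z) (hZ : MeasurableSet Z) {t : Set F} (ht : IsOpen t) :
    MeasurableSet (f ⁻¹' t ∩ Z) := by
  obtain ⟨V, hV, hVZ⟩ := continuousOn_iff'.1 hf t ht
  exact hVZ ▸ hV.measurableSet.inter hZ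

lemma coe_le_log_div_neg_of_le_exp {p : ENNReal} {s r : ℝ} (hr : 0 < r)
    (hp : p ≤ ENNReal.ofReal (Real.exp (-(s * r)))) :
    (s : EReal) ≤ ENNReal.log p / ((-r : ℝ) : EReal) := by
  have hlog : ENNReal.log p ≤ ((-(s * r) : ℝ) : EReal) := by
    simpa only [ENNReal.log_ofReal_of_pos (Real.exp_pos _), Real.log_exp]
      using ENNReal.log_le_log hp
  calc (s : EReal) = ((-(s * r) : ℝ) : EReal) / ((-r : ℝ) : EReal) := by
        rw [← EReal.coe_div, neg_div_neg_eq, mul_div_cancel_right₀ s hr.ne']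
    _ ≤ ENNReal.log p / ((-r : ℝ) : EReal) :=
        EReal.div_le_div_right_of_nonpos (EReal.coe_nonpos.2 (neg_nonpos.2 hr.le)) hlog

theorem ldp_violation_lower_general {m : ℕ} {Ξ : Set (Rn m)} {Q : Rn m → ℝ} {q : ℝ → ℝ}
    {lam : Rn m → ℝ} {α : ℝ} (hne : Ξ.Nonempty) (hcl : IsClosed Ξ) (hcone : IsPosCone Ξ)
    [IsProbabilityMeasure (gibbsMeasure (volume.restrict Ξ) Q)]
    (hα : 0 < α) (hq : RegVary q α) (hQ : MultiRegVary Ξ Q q lam)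
    (hlam : ∀ z ∈ Ξ, ‖z‖ = 1 → 0 < lam z)
    {G : ℝ → Rn m → ℝ} {r : ℝ → ℝ} {gs : Rn m → ℝ} (hr : ∀ u, 0 < u → 0 < r u)
    (hG : HasScalingLimit Ξ G r gs) (hmeas : ∀ u, 0 < u → MeasurableSet ({z | 0 < G u z} ∩ Ξ)) :
    (⨅ w ∈ {w ∈ Ξ | 0 ≤ gs w}, (lam w : EReal)) ≤
      liminf (fun u : ℝ => ENNReal.log (gibbsMeasure (volume.restrict Ξ) Q {z | 0 < G u z}) /
        ((-(q u) : ℝ) : EReal)) atTop := by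
  refine EReal.ge_of_forall_gt_iff_ge.1 fun s hs => le_liminf_of_le (by isBoundedDefault) ?_
  suffices hbound : ∀ᶠ u in atTop, gibbsMeasure (volume.restrict Ξ) Q {z | 0 < G u z} ≤
      ENNReal.ofReal (Real.exp (-(s * q u))) by
    filter_upwards [hbound, eventually_gt_atTop 0] with u hu hu0 using
      coe_le_log_div_neg_of_le_exp (hq.1 u hu0) hu
  rcases le_or_gt s 0 with hs0 | hs0
  · filter_upwards [eventually_gt_atTop 0] with u hu
    refine prob_le_one.trans (ENNReal.one_le_ofReal.2 (Real.one_le_exp ?_))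
    exact neg_nonneg.2 (mul_nonpos_of_nonpos_of_nonneg hs0 (hq.1 u hu).le)
  · obtain ⟨s', hss', hs'⟩ := EReal.lt_iff_exists_real_btwn.1 hs
    refine hQ.eventually_gibbsMeasure_le_exp hq hα hne hcl hcone hlam hG hr hmeas hs0
      (EReal.coe_lt_coe_iff.1 hss') fun w hw hgw => ?_
    exact EReal.coe_lt_coe_iff.1 (hs'.trans_le (iInf₂_le w ⟨hw, hgw⟩))

/-- LDP lower bound for the violation probability: along any family
`(y_u)` with `u^γ y_u ∈ X` and `y_u → y₀ ∈ X^∞_γ`,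
`liminf_{u→∞} log P(g(u^γ y_u, ·) > 0) / (−q(u)) ≥ I(y₀)`,
where `I(y) = inf{lam(w) : w ∈ Ξ, gs(y, w) ≥ 0}` (with `inf ∅ = ⊤`, `log 0 = ⊥`). -/
theorem ldp_violation_lower {n m : ℕ} (P : Measure (Rn m)) (Ξ : Set (Rn m))
    (Q : Rn m → ℝ) (q : ℝ → ℝ) (lam : Rn m → ℝ) (α : ℝ)
    (hA1 : Assumption1 P Ξ Q q lam α)
    (X : Set (Rn n)) (g : Rn n → Rn m → ℝ) (γ ρ : ℝ) (gs : Rn n → Rn m → ℝ)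
    (hA2 : Assumption2 X Ξ g γ ρ gs)
    (yu : ℝ → Rn n) (y₀ : Rn n)
    (hyuX : ∀ u : ℝ, 0 < u → (u ^ γ) • yu u ∈ X)
    (hy₀ : y₀ ∈ asymCone X γ)
    (hyconv : Tendsto yu atTop (𝓝 y₀)) :
    (⨅ w ∈ {w ∈ Ξ | 0 ≤ gs y₀ w}, (lam w : EReal)) ≤
      Filter.liminf
        (fun u : ℝ =>
          ENNReal.log (P {z : Rn m | 0 < g ((u ^ γ) • yu u) z}) /
            ((-(q u) : ℝ) : EReal))
        atTop := by
  obtain ⟨hprob, hne, hcl, hcone, -, -, rfl, hα, hq, hQ, hlam⟩ := hA1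
  obtain ⟨⟨-, -, -, -, -, -, -, -, hgcont⟩, -, -, hg, -⟩ := hA2
  rw [withDensity_indicator_exp_neg volume hcl.measurableSet Q] at hprob ⊢
  exact ldp_violation_lower_general hne hcl hcone hα hq hQ hlam
    (fun u hu => Real.rpow_pos_of_pos hu ρ) (hg.hasScalingLimit hcone hyuX hy₀ hyconv) fun u hu =>
      measurableSet_preimage_inter_of_continuousOn (hgcont _ (hyuX u hu)) hcl.measurableSet
        isOpen_Ioi
end
end
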